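/- Under Condition (★), for every integer h ≥ 2, ∑_{p : N(p) ≤ x^{1/h}} 1/(N(p)·(1 − N(p)^{−1/h} + N(p)^{−1})) = log log x + 𝔇₁ + O_h(1/log x) as x → ∞, where the implied constant depends only on h and the data P, N, κ, θ. -/

import Mathlib

open Filter Topology Asymptotics
open scoped Classical

noncomputable section

/-- The norm on the free abelian monoid `P →₀ ℕ`, extended multiplicatively
from the norm `N` on the prime elements. -/
def Nm {P : Type*} (N : P → ℕ) (m : P →₀ ℕ) : ℕ :=
  m.prod fun p k => N p ^ k

/-- The number of distinct prime elements generating `m`. -/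
def omegaM {P : Type*} (m : P →₀ ℕ) : ℕ := m.support.card

/-- `m` is `h`-free: every multiplicity is at most `h - 1`. -/
def HFree {P : Type*} (h : ℕ) (m : P →₀ ℕ) : Prop := ∀ p, m p ≤ h - 1

/-- `m` is `h`-full: every nonzero multiplicity is at least `h`. -/
def HFull {P : Type*} (h : ℕ) (m : P →₀ ℕ) : Prop := ∀ p, m p = 0 ∨ h ≤ m p

/-- Condition (★): `#{m : N(m) ≤ x} = κ·x + O(x^θ)` with `κ > 0`, `0 ≤ θ < 1`. -/
def StarCond {P : Type*} (N : P → ℕ) (κ θ : ℝ) : Prop :=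
  0 < κ ∧ 0 ≤ θ ∧ θ < 1 ∧
    (fun x : ℝ => (({m : P →₀ ℕ | (Nm N m : ℝ) ≤ x}.ncard : ℝ) - κ * x))
      =O[atTop] fun x : ℝ => x ^ θ

/-- The generalized zeta function `ζ_M(s) = ∑_m N(m)^{-s}`. -/
def zetaM {P : Type*} (N : P → ℕ) (s : ℝ) : ℝ :=
  ∑' m : P →₀ ℕ, 1 / (Nm N m : ℝ) ^ s

/-- The constant `γ_h`. -/
def gammah {P : Type*} (N : P → ℕ) (h : ℕ) : ℝ :=
  ∏' p : P, (1 + ((N p : ℝ) - (N p : ℝ) ^ (1 / (h : ℝ))) /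
    ((N p : ℝ) ^ 2 * ((N p : ℝ) ^ (1 / (h : ℝ)) - 1)))

/-- `A` is the Mertens constant `𝔄` of the prime system:
`𝔄 = lim (∑_{N(p) ≤ x} 1/N(p) − log log x)`. -/
def IsMertens {P : Type*} (N : P → ℕ) (A : ℝ) : Prop :=
  Tendsto (fun x : ℝ =>
      (∑ᶠ p ∈ {p : P | (N p : ℝ) ≤ x}, 1 / (N p : ℝ)) - Real.log (Real.log x))
    atTop (𝓝 A)

/-- The constant `𝔅 = -π²/6`. -/
def Bconst : ℝ := -(Real.pi ^ 2) / 6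

/-- The constant `ℭ₁`, given the Mertens constant `A`. -/
def C1const {P : Type*} (N : P → ℕ) (h : ℕ) (A : ℝ) : ℝ :=
  A - ∑' p : P, ((N p : ℝ) - 1) / ((N p : ℝ) * ((N p : ℝ) ^ h - 1))

/-- The constant `ℭ₂`, given the Mertens constant `A`. -/
def C2const {P : Type*} (N : P → ℕ) (h : ℕ) (A : ℝ) : ℝ :=
  C1const N h A ^ 2 + C1const N h A + Bconst -
    ∑' p : P, (((N p : ℝ) ^ (h - 1) - 1) / ((N p : ℝ) ^ h - 1)) ^ 2

/-- The convergent series `𝔏_h(r)`. -/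
def LhSum {P : Type*} (N : P → ℕ) (h : ℕ) (r : ℝ) : ℝ :=
  ∑' p : P, 1 / ((N p : ℝ) ^ (r / (h : ℝ) - 1) *
    ((N p : ℝ) - (N p : ℝ) ^ (1 - 1 / (h : ℝ)) + 1))

/-- The constant `𝔇₁`, given the Mertens constant `A`. -/
def D1const {P : Type*} (N : P → ℕ) (h : ℕ) (A : ℝ) : ℝ :=
  A - Real.log (h : ℝ) + LhSum N h ((h : ℝ) + 1) - LhSum N h (2 * (h : ℝ))

/-- The constant `𝔇₂`, given the Mertens constant `A`. -/
def D2const {P : Type*} (N : P → ℕ) (h : ℕ) (A : ℝ) : ℝ :=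
  D1const N h A ^ 2 + D1const N h A + Bconst -
    ∑' p : P, (1 / ((N p : ℝ) - (N p : ℝ) ^ (1 - 1 / (h : ℝ)) + 1)) ^ 2

/-- The error term `R_{S_h}(x)` for `h`-free counts. -/
def RSfree (h : ℕ) (θ : ℝ) (x : ℝ) : ℝ :=
  if 1 / (h : ℝ) < θ then x ^ θ
  else if 1 / (h : ℝ) = θ then x ^ (1 / (h : ℝ)) * Real.log x
  else x ^ (1 / (h : ℝ))

/-- The error term `R_{N_h}(x)` for `h`-full counts. -/
def RNfull (h : ℕ) (θ : ℝ) (x : ℝ) : ℝ :=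
  if (h : ℝ) / ((h : ℝ) + 1) < θ then x ^ (θ / (h : ℝ))
  else if ∃ i : ℕ, 1 ≤ i ∧ i ≤ h - 1 ∧ θ = (h : ℝ) / ((h : ℝ) + (i : ℝ)) then
    x ^ (1 / ((h : ℝ) + 1)) * Real.log x
  else x ^ (1 / ((h : ℝ) + 1))

open MeasureTheory

def BfS {ι : Type*} (ν : ι → ℕ) (x : ℝ) : Finset ι :=
  if h : {i | (ν i : ℝ) ≤ x}.Finite then h.toFinset else ∅

def FinB {ι : Type*} (ν : ι → ℕ) : Prop := ∀ x : ℝ, {i | (ν i : ℝ) ≤ x}.Finite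

lemma mem_BfS {ι : Type*} {ν : ι → ℕ} (hf : FinB ν) (x : ℝ) (i : ι) :
    i ∈ BfS ν x ↔ (ν i : ℝ) ≤ x := by
  unfold BfS
  rw [dif_pos (hf x)]
  simp

lemma BfS_fiber {ι : Type*} {ν : ι → ℕ} (hf : FinB ν) (w : ι → ℝ) (g : ℝ → ℝ) (x : ℝ) (hx : 0 ≤ x) :
    ∑ i ∈ BfS ν x, g (ν i) * w i =
      ∑ n ∈ Finset.Icc 0 ⌊x⌋₊, g n * (∑ i ∈ (BfS ν (n:ℝ)).filter (fun i => ν i = n), w i) := by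
  rw [← Finset.sum_fiberwise_of_maps_to (g := ν) (t := Finset.Icc 0 ⌊x⌋₊)]
  · apply Finset.sum_congr rfl
    intro n hn
    rw [Finset.mul_sum]
    have hn' : (n:ℝ) ≤ x := by
      rw [Finset.mem_Icc] at hn
      exact (Nat.le_floor_iff hx).1 hn.2
    have : (BfS ν x).filter (fun i => ν i = n) = (BfS ν (n:ℝ)).filter (fun i => ν i = n) := by
      ext i
      simp only [Finset.mem_filter, mem_BfS hf]
      constructor
      · rintro ⟨_, rfl⟩
        exact ⟨le_refl _, rfl⟩
      · rintro ⟨_, rfl⟩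
        exact ⟨hn', rfl⟩
    rw [this]
    apply Finset.sum_congr rfl
    intro i hi
    rw [(Finset.mem_filter.1 hi).2]
  · intro i hi
    rw [mem_BfS hf] at hi
    rw [Finset.mem_Icc]
    exact ⟨Nat.zero_le _, Nat.le_floor hi⟩

lemma abel_gen {ι : Type*} {ν : ι → ℕ} (hf : FinB ν) (w : ι → ℝ) (f f' : ℝ → ℝ) (a x : ℝ)
    (ha : 0 ≤ a) (hax : a ≤ x) (hd : ∀ t ∈ Set.Icc a x, HasDerivAt f (f' t) t)
    (hc : ContinuousOn f' (Set.Icc a x)) :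
    ∑ i ∈ BfS ν x, f (ν i) * w i - ∑ i ∈ BfS ν a, f (ν i) * w i =
      f x * (∑ i ∈ BfS ν x, w i) - f a * (∑ i ∈ BfS ν a, w i)
        - ∫ t in a..x, f' t * ∑ i ∈ BfS ν t, w i := by
  set c : ℕ → ℝ := fun n => ∑ i ∈ (BfS ν (n:ℝ)).filter (fun i => ν i = n), w i with hcdef
  have hS : ∀ t : ℝ, 0 ≤ t → ∑ i ∈ BfS ν t, w i = ∑ n ∈ Finset.Icc 0 ⌊t⌋₊, c n := by
    intro t ht
    have := BfS_fiber hf w (fun _ => 1) t ht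
    simpa using this
  have hde : Set.EqOn (deriv f) f' (Set.Icc a x) := fun t ht => (hd t ht).deriv
  have key := sum_mul_eq_sub_sub_integral_mul (f := f) c ha hax
    (fun t ht => (hd t ht).differentiableAt)
    (((integrableOn_congr_fun hde measurableSet_Icc)).2 hc.integrableOn_Icc)
  have hx : 0 ≤ x := ha.trans hax
  rw [BfS_fiber hf w f x hx, BfS_fiber hf w f a ha, hS x hx, hS a ha]
  have hI : ∫ t in a..x, f' t * ∑ i ∈ BfS ν t, w i =
      ∫ t in Set.Ioc a x, deriv f t * ∑ n ∈ Finset.Icc 0 ⌊t⌋₊, c n := by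
    rw [intervalIntegral.integral_of_le hax]
    apply setIntegral_congr_fun measurableSet_Ioc
    intro t ht
    simp only
    rw [hde (Set.Ioc_subset_Icc_self ht), hS t (ha.trans ht.1.le)]
  rw [hI, ← key]
  have hfl : ⌊a⌋₊ ≤ ⌊x⌋₊ := Nat.floor_le_floor hax
  have : Finset.Icc 0 ⌊x⌋₊ = Finset.Icc 0 ⌊a⌋₊ ∪ Finset.Ioc ⌊a⌋₊ ⌊x⌋₊ := by
    ext n; simp only [Finset.mem_Icc, Finset.mem_union, Finset.mem_Ioc]; omega
  rw [this, Finset.sum_union]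
  · ring
  · rw [Finset.disjoint_left]
    intro n hn; simp only [Finset.mem_Icc, Finset.mem_Ioc] at hn ⊢; omega

lemma abel_integrable {ι : Type*} {ν : ι → ℕ} (hf : FinB ν) (w : ι → ℝ) (f' : ℝ → ℝ) (a x : ℝ)
    (ha : 0 ≤ a) (hax : a ≤ x) (hc : ContinuousOn f' (Set.Icc a x)) :
    IntervalIntegrable (fun t => f' t * ∑ i ∈ BfS ν t, w i) volume a x := by
  set c : ℕ → ℝ := fun n => ∑ i ∈ (BfS ν (n:ℝ)).filter (fun i => ν i = n), w i with hcdef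
  have hS : ∀ t : ℝ, 0 ≤ t → ∑ i ∈ BfS ν t, w i = ∑ n ∈ Finset.Icc 0 ⌊t⌋₊, c n := by
    intro t ht
    have := BfS_fiber hf w (fun _ => 1) t ht
    simpa using this
  rw [intervalIntegrable_iff_integrableOn_Icc_of_le hax]
  have := integrableOn_mul_sum_Icc c (m := 0) ha (hc.integrableOn_Icc (μ := volume))
  refine (integrableOn_congr_fun ?_ measurableSet_Icc).1 this
  intro t ht
  simp only
  rw [hS t (ha.trans ht.1)]

lemma abel_one {ι : Type*} {ν : ι → ℕ} (hf : FinB ν) (h1 : ∀ i, 1 ≤ ν i)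
    (f f' : ℝ → ℝ) (x : ℝ)
    (hax : 1 ≤ x) (hd : ∀ t, 1 ≤ t → HasDerivAt f (f' t) t)
    (hc : ContinuousOn f' (Set.Ici 1)) :
    ∑ i ∈ BfS ν x, f (ν i) =
      f x * (BfS ν x).card - ∫ t in (1:ℝ)..x, f' t * (BfS ν t).card := by
  have key := abel_gen hf (fun _ => 1) f f' 1 x zero_le_one hax (fun t ht => hd t ht.1)
    (hc.mono Set.Icc_subset_Ici_self)
  have : ∑ i ∈ BfS ν 1, f (ν i) * 1 = f 1 * ∑ i ∈ BfS ν 1, (1:ℝ) := by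
    rw [Finset.mul_sum]
    apply Finset.sum_congr rfl
    intro i hi
    rw [mem_BfS hf] at hi
    have : (ν i : ℝ) = 1 := le_antisymm hi (by exact_mod_cast h1 i)
    rw [this]
  rw [this] at key
  simp only [mul_one, Finset.sum_const, nsmul_eq_mul] at key
  linarith

lemma powsum {ι : Type*} {ν : ι → ℕ} (hf : FinB ν) (h1 : ∀ i, 1 ≤ ν i) (C : ℝ)
    (hC : ∀ x : ℝ, 1 ≤ x → ((BfS ν x).card : ℝ) ≤ C * x) (s : ℝ) (hs : 0 < s) (hs1 : s ≠ 1)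
    (x : ℝ) (hx : 1 ≤ x) :
    ∑ i ∈ BfS ν x, (ν i : ℝ) ^ (-s) ≤ C * x ^ (1 - s) + s * C * ((x ^ (1 - s) - 1) / (1 - s)) := by
  have hd : ∀ t : ℝ, 1 ≤ t → HasDerivAt (fun t : ℝ => t ^ (-s)) (-s * t ^ (-s - 1)) t := by
    intro t ht
    exact Real.hasDerivAt_rpow_const (Or.inl (by linarith))
  have hc : ContinuousOn (fun t : ℝ => -s * t ^ (-s - 1)) (Set.Ici 1) := by
    apply ContinuousOn.mul continuousOn_const
    apply ContinuousOn.rpow_const continuousOn_id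
    intro t ht
    left
    have : (1:ℝ) ≤ t := ht
    simp only [id]; linarith
  have key := abel_one hf h1 (fun t : ℝ => t ^ (-s)) _ x hx hd hc
  rw [key]
  have hx0 : (0:ℝ) < x := by linarith
  have e1 : x ^ (-s) * ((BfS ν x).card : ℝ) ≤ C * x ^ (1 - s) := by
    have : x ^ (1 - s) = x ^ (-s) * x := by
      rw [← Real.rpow_add_one hx0.ne']; ring_nf
    rw [this]
    have := mul_le_mul_of_nonneg_left (hC x hx) (Real.rpow_nonneg hx0.le (-s))
    linarith
  have e2 : -∫ t in (1:ℝ)..x, -s * t ^ (-s - 1) * ((BfS ν t).card : ℝ) ≤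
      ∫ t in (1:ℝ)..x, s * C * t ^ (-s) := by
    rw [← intervalIntegral.integral_neg]
    apply intervalIntegral.integral_mono_on hx
    · have := (abel_integrable hf (fun _ => 1) _ 1 x zero_le_one hx
        (hc.mono Set.Icc_subset_Ici_self)).neg
      simp only [Finset.sum_const, nsmul_eq_mul, mul_one] at this
      exact this
    · apply ContinuousOn.intervalIntegrable
      rw [Set.uIcc_of_le hx]
      apply ContinuousOn.mul continuousOn_const
      apply ContinuousOn.rpow_const continuousOn_id
      intro t ht
      left
      have : (1:ℝ) ≤ t := ht.1
      simp only [id]; linarith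
    · intro t ht
      have ht0 : (0:ℝ) < t := by linarith [ht.1]
      have h2 := hC t ht.1
      have : t ^ (-s) = t ^ (-s - 1) * t := by
        rw [← Real.rpow_add_one ht0.ne']; ring_nf
      rw [this]
      have h3 := mul_le_mul_of_nonneg_left h2
        (mul_nonneg hs.le (Real.rpow_nonneg ht0.le (-s-1)))
      linarith
  have e3 : ∫ t in (1:ℝ)..x, s * C * t ^ (-s) = s * C * ((x ^ (1 - s) - 1) / (1 - s)) := by
    rw [intervalIntegral.integral_const_mul, integral_rpow]
    · rw [Real.one_rpow, show -s + 1 = 1 - s by ring]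
    · right
      refine ⟨by intro h; apply hs1; linarith, ?_⟩
      rw [Set.uIcc_of_le hx]
      intro h; linarith [h.1]
  linarith

lemma abel_asym {ι : Type*} {ν : ι → ℕ} (hf : FinB ν) (h1 : ∀ i, 1 ≤ ν i) (C κ θ σ K : ℝ)
    (hE : ∀ x : ℝ, 1 ≤ x → |((BfS ν x).card : ℝ) - κ * x| ≤ C * x ^ θ) (hσ : θ + σ < 1)
    (f f' G : ℝ → ℝ) (hd : ∀ t, 1 ≤ t → HasDerivAt f (f' t) t)
    (hc : ContinuousOn f' (Set.Ici 1)) (hK : 0 ≤ K)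
    (hfb : ∀ t, 1 ≤ t → |f t| ≤ K * t ^ (σ - 1))
    (hfb' : ∀ t, 1 ≤ t → |f' t| ≤ K * t ^ (σ - 2))
    (hG : ∀ t, 1 ≤ t → HasDerivAt G (t * f' t) t) :
    ∃ b C' : ℝ, ∀ x : ℝ, 1 ≤ x →
      |∑ i ∈ BfS ν x, f (ν i) - (κ * x * f x - κ * G x) - b| ≤ C' * x ^ (θ + σ - 1) := by
  set E : ℝ → ℝ := fun t => ((BfS ν t).card : ℝ) - κ * t with hEdef
  have hC0 : 0 ≤ C := by
    have := hE 1 le_rfl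
    rw [Real.one_rpow] at this
    linarith [abs_nonneg (((BfS ν 1).card : ℝ) - κ * 1)]
  have hcid : ContinuousOn (fun t : ℝ => κ * (t * f' t)) (Set.Ici 1) :=
    continuousOn_const.mul (continuousOn_id.mul hc)
  have hint1 : ∀ x, 1 ≤ x → IntervalIntegrable (fun t => f' t * ((BfS ν t).card : ℝ)) volume 1 x := by
    intro x hx
    have := abel_integrable hf (fun _ => 1) f' 1 x zero_le_one hx
        (hc.mono Set.Icc_subset_Ici_self)
    simpa only [Finset.sum_const, nsmul_eq_mul, mul_one] using this
  have hint2 : ∀ x, 1 ≤ x → IntervalIntegrable (fun t => κ * (t * f' t)) volume 1 x := by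
    intro x hx
    apply ContinuousOn.intervalIntegrable
    rw [Set.uIcc_of_le hx]
    exact hcid.mono Set.Icc_subset_Ici_self
  have hint3 : ∀ x, 1 ≤ x → IntervalIntegrable (fun t => f' t * E t) volume 1 x := by
    intro x hx
    refine ((hint1 x hx).sub (hint2 x hx)).congr ?_
    intro t _
    simp only [hEdef]; ring
  have hbd : ∀ t, 1 ≤ t → ‖f' t * E t‖ ≤ K * C * t ^ (θ + σ - 2) := by
    intro t ht
    rw [Real.norm_eq_abs, abs_mul]
    have ht0 : (0:ℝ) < t := by linarith
    calc |f' t| * |E t| ≤ (K * t ^ (σ - 2)) * (C * t ^ θ) :=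
          mul_le_mul (hfb' t ht) (hE t ht) (abs_nonneg _)
            (mul_nonneg hK (Real.rpow_nonneg ht0.le _))
      _ = K * C * (t ^ (σ - 2) * t ^ θ) := by ring
      _ = _ := by rw [← Real.rpow_add ht0]; ring_nf
  have hdom : ∀ c : ℝ, 1 ≤ c → IntegrableOn (fun t : ℝ => K * C * t ^ (θ + σ - 2)) (Set.Ioi c) := by
    intro c hc
    exact (integrableOn_Ioi_rpow_of_lt (by linarith) (by linarith)).const_mul _
  have hmeas : AEStronglyMeasurable (fun t => f' t * E t) (volume.restrict (Set.Ioi 1)) := by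
    have : (Set.Ioi (1:ℝ)) = ⋃ n : ℕ, Set.Ioc 1 ((n:ℝ) + 1) := by
      ext t
      simp only [Set.mem_Ioi, Set.mem_iUnion, Set.mem_Ioc]
      constructor
      · intro h
        obtain ⟨n, hn⟩ := exists_nat_ge t
        exact ⟨n, h, by linarith⟩
      · rintro ⟨n, h, _⟩; exact h
    rw [this, aestronglyMeasurable_iUnion_iff]
    intro n
    exact (hint3 (n+1) (by linarith [(Nat.cast_nonneg n : (0:ℝ) ≤ n)])).1.aestronglyMeasurable
  have hint4 : IntegrableOn (fun t => f' t * E t) (Set.Ioi 1) := by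
    refine Integrable.mono' (hdom 1 le_rfl) hmeas ?_
    rw [ae_restrict_iff' measurableSet_Ioi]
    exact Eventually.of_forall fun t ht => hbd t (le_of_lt ht)
  refine ⟨κ * G 1 - ∫ t in Set.Ioi 1, f' t * E t, K * C + K * C / (1 - θ - σ), ?_⟩
  intro x hx
  have hx0 : (0:ℝ) < x := by linarith
  rw [abel_one hf h1 f f' x hx hd hc]
  have hsplit : ∫ t in (1:ℝ)..x, f' t * ((BfS ν t).card : ℝ) =
      κ * (G x - G 1) + ∫ t in (1:ℝ)..x, f' t * E t := by
    have : ∫ t in (1:ℝ)..x, κ * (t * f' t) = κ * (G x - G 1) := by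
      rw [intervalIntegral.integral_const_mul]
      congr 1
      apply intervalIntegral.integral_eq_sub_of_hasDerivAt
      · intro t ht
        rw [Set.uIcc_of_le hx] at ht
        exact hG t ht.1
      · apply ContinuousOn.intervalIntegrable
        rw [Set.uIcc_of_le hx]
        exact (continuousOn_id.mul hc).mono Set.Icc_subset_Ici_self
    rw [← this, ← intervalIntegral.integral_add (hint2 x hx) (hint3 x hx)]
    congr 1
    ext t
    simp only [hEdef]; ring
  have hJ : ∫ t in (1:ℝ)..x, f' t * E t =
      (∫ t in Set.Ioi 1, f' t * E t) - ∫ t in Set.Ioi x, f' t * E t := by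
    have := intervalIntegral.integral_Ioi_sub_Ioi hint4 hx
    rw [← this]
  have htail : |∫ t in Set.Ioi x, f' t * E t| ≤ K * C / (1 - θ - σ) * x ^ (θ + σ - 1) := by
    have h5 : ‖∫ t in Set.Ioi x, f' t * E t‖ ≤ ∫ t in Set.Ioi x, K * C * t ^ (θ + σ - 2) := by
      apply norm_integral_le_of_norm_le (hdom x hx)
      rw [ae_restrict_iff' measurableSet_Ioi]
      exact Eventually.of_forall fun t ht => hbd t (hx.trans (le_of_lt ht))
    rw [Real.norm_eq_abs] at h5
    refine h5.trans (le_of_eq ?_)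
    rw [integral_const_mul, integral_Ioi_rpow_of_lt (by linarith) hx0]
    have : θ + σ - 2 + 1 = -(1 - θ - σ) := by ring
    rw [this, show θ + σ - 1 = -(1 - θ - σ) by ring]
    rw [neg_div_neg_eq]
    ring
  have hfE : |f x * E x| ≤ K * C * x ^ (θ + σ - 1) := by
    rw [abs_mul]
    calc |f x| * |E x| ≤ (K * x ^ (σ - 1)) * (C * x ^ θ) :=
          mul_le_mul (hfb x hx) (hE x hx) (abs_nonneg _)
            (mul_nonneg hK (Real.rpow_nonneg hx0.le _))
      _ = K * C * (x ^ (σ - 1) * x ^ θ) := by ring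
      _ = _ := by rw [← Real.rpow_add hx0]; ring_nf
  have : f x * ((BfS ν x).card : ℝ) - (κ * (G x - G 1) + ((∫ t in Set.Ioi 1, f' t * E t)
      - ∫ t in Set.Ioi x, f' t * E t)) - (κ * x * f x - κ * G x)
      - (κ * G 1 - ∫ t in Set.Ioi 1, f' t * E t) = f x * E x + ∫ t in Set.Ioi x, f' t * E t := by
    simp only [hEdef]; ring
  rw [hsplit, hJ, this, add_mul]
  exact (abs_add_le _ _).trans (add_le_add hfE htail)


def muM {P : Type*} (m : P →₀ ℕ) : ℝ :=
  if ∀ p, m p ≤ 1 then (-1) ^ m.support.card else 0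

def lamM {P : Type*} (N : P → ℕ) (m : P →₀ ℕ) : ℝ :=
  ∑ p ∈ m.support, if m.support = {p} then Real.log (N p) else 0

lemma abs_muM {P : Type*} (m : P →₀ ℕ) : |muM m| ≤ 1 := by
  unfold muM
  split_ifs
  · rw [abs_pow, abs_neg, abs_one, one_pow]
  · simp

lemma mu_conv {P : Type*} (m : P →₀ ℕ) :
    ∑ q ∈ Finset.HasAntidiagonal.antidiagonal m, muM q.1 = if m = 0 then 1 else 0 := by
  have h1 : ∑ q ∈ Finset.HasAntidiagonal.antidiagonal m, muM q.1 =
      ∑ s ∈ m.support.powerset, (-1 : ℝ) ^ s.card := by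
    unfold muM
    rw [← Finset.sum_filter]
    refine Finset.sum_bij' (fun q _ => q.1.support)
      (fun s _ => (Finsupp.indicator s (fun _ _ => 1), m - Finsupp.indicator s (fun _ _ => 1)))
      ?_ ?_ ?_ ?_ ?_
    · rintro ⟨a, b⟩ h
      simp only [Finset.mem_filter, Finset.HasAntidiagonal.mem_antidiagonal] at h
      rw [Finset.mem_powerset]
      rw [← h.1]
      intro p hp
      simp only [Finsupp.mem_support_iff, Finsupp.add_apply] at hp ⊢
      omega
    · intro s hs
      rw [Finset.mem_powerset] at hs
      simp only [Finset.mem_filter, Finset.HasAntidiagonal.mem_antidiagonal]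
      constructor
      · ext p
        have : p ∈ s → m p ≠ 0 := fun h => Finsupp.mem_support_iff.1 (hs h)
        simp only [Finsupp.add_apply, Finsupp.tsub_apply, Finsupp.indicator_apply]
        split_ifs with h
        · have := this h; omega
        · omega
      · intro p
        simp only [Finsupp.indicator_apply]
        split_ifs <;> simp
    · rintro ⟨a, b⟩ h
      simp only [Finset.mem_filter, Finset.HasAntidiagonal.mem_antidiagonal] at h
      have ha : Finsupp.indicator a.support (fun _ _ => 1) = a := by
        ext p
        have := h.2 p
        simp only [Finsupp.indicator_apply, Finsupp.mem_support_iff]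
        split_ifs with h <;> omega
      simp only [ha, Prod.mk.injEq, true_and]
      rw [← h.1]; simp
    · intro s hs
      ext p
      simp [Finsupp.indicator_apply]
    · rintro ⟨a, b⟩ h
      rfl
  rw [h1]
  have := Finset.sum_powerset_neg_one_pow_card (x := m.support)
  have h2 := congrArg (Int.cast : ℤ → ℝ) this
  push_cast at h2
  rw [h2]
  simp

lemma Nm_pos {P : Type*} {N : P → ℕ} (hN : ∀ p, 2 ≤ N p) (m : P →₀ ℕ) : 1 ≤ Nm N m := by
  unfold Nm
  apply Finset.one_le_prod'
  intro p _
  exact Nat.one_le_pow _ _ (by linarith [hN p])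

lemma Nm_add {P : Type*} (N : P → ℕ) (a b : P →₀ ℕ) : Nm N (a + b) = Nm N a * Nm N b := by
  unfold Nm
  exact Finsupp.prod_add_index' (by simp) (fun p => pow_add _)

lemma Nm_single {P : Type*} (N : P → ℕ) (p : P) (k : ℕ) : Nm N (Finsupp.single p k) = N p ^ k := by
  unfold Nm
  exact Finsupp.prod_single_index (by simp)

lemma log_Nm {P : Type*} {N : P → ℕ} (hN : ∀ p, 2 ≤ N p) (m : P →₀ ℕ) :
    Real.log (Nm N m) = ∑ p ∈ m.support, m p * Real.log (N p) := by
  unfold Nm Finsupp.prod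
  push_cast
  rw [Real.log_prod]
  · apply Finset.sum_congr rfl
    intro p _
    rw [Real.log_pow]
  · intro p _
    have := hN p
    positivity

lemma lam_conv {P : Type*} {N : P → ℕ} (hN : ∀ p, 2 ≤ N p) (m : P →₀ ℕ) :
    ∑ q ∈ Finset.HasAntidiagonal.antidiagonal m, lamM N q.1 = Real.log (Nm N m) := by
  rw [log_Nm hN]
  have h1 : ∀ q ∈ Finset.HasAntidiagonal.antidiagonal m, lamM N q.1 =
      ∑ p ∈ m.support, if q.1.support = {p} then Real.log (N p) else 0 := by
    rintro ⟨a, b⟩ h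
    rw [Finset.HasAntidiagonal.mem_antidiagonal] at h
    unfold lamM
    apply Finset.sum_subset
    · rw [← h]
      intro p hp
      simp only [Finsupp.mem_support_iff, Finsupp.add_apply] at hp ⊢
      omega
    · intro p _ hp
      rw [if_neg]
      intro h2
      apply hp
      simp only at h2 ⊢
      rw [h2]; simp
  rw [Finset.sum_congr rfl h1, Finset.sum_comm]
  apply Finset.sum_congr rfl
  intro p hp
  rw [← Finset.sum_filter, Finset.sum_const, nsmul_eq_mul]
  congr 2
  refine Eq.trans ?_ (show (Finset.Icc 1 (m p)).card = m p by simp)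
  symm
  refine Finset.card_bij (fun k _ => (Finsupp.single p k, m - Finsupp.single p k)) ?_ ?_ ?_
  · intro k hk
    rw [Finset.mem_Icc] at hk
    simp only [Finset.mem_filter, Finset.HasAntidiagonal.mem_antidiagonal]
    constructor
    · apply add_tsub_cancel_of_le
      rw [Finsupp.single_le_iff]; exact hk.2
    · have hk0 : k ≠ 0 := by omega
      ext r; simp only [Finsupp.mem_support_iff, Finsupp.single_apply, Finset.mem_singleton]; split_ifs with hr <;> simp [hk0, hr, eq_comm]
  · intro k _ l _ h
    simp only [Prod.mk.injEq] at h
    exact Finsupp.single_injective p h.1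
  · rintro ⟨a, b⟩ h
    simp only [Finset.mem_filter, Finset.HasAntidiagonal.mem_antidiagonal] at h
    obtain ⟨h, hs⟩ := h
    have ha : a = Finsupp.single p (a p) := (Finsupp.support_subset_singleton).1 hs.le
    have hap : a p ≠ 0 := by
      rw [← Finsupp.mem_support_iff, hs]; simp
    refine ⟨a p, ?_, ?_⟩
    · rw [Finset.mem_Icc, ← h, Finsupp.add_apply]; omega
    · rw [← ha, ← h]; simp

lemma mu_log {P : Type*} {N : P → ℕ} (hN : ∀ p, 2 ≤ N p) (m : P →₀ ℕ) :
    ∑ q ∈ Finset.HasAntidiagonal.antidiagonal m, muM q.1 * Real.log (Nm N q.2) = lamM N m := by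
  let Z : MvPowerSeries P ℝ := fun _ => 1
  let Mu : MvPowerSeries P ℝ := fun m => muM m
  let La : MvPowerSeries P ℝ := fun m => lamM N m
  let Lo : MvPowerSeries P ℝ := fun m => Real.log (Nm N m)
  have h1 : Mu * Z = 1 := by
    ext n
    rw [MvPowerSeries.coeff_mul, MvPowerSeries.coeff_one, ← mu_conv n]
    apply Finset.sum_congr rfl
    intro q _
    exact mul_one _
  have h2 : La * Z = Lo := by
    ext n
    rw [MvPowerSeries.coeff_mul]
    refine Eq.trans ?_ (lam_conv hN n)
    apply Finset.sum_congr rfl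
    intro q _
    exact mul_one _
  have h3 : Mu * Lo = La := by
    rw [← h2, mul_comm La Z, ← mul_assoc, h1, one_mul]
  have := congrArg (MvPowerSeries.coeff m) h3
  rw [MvPowerSeries.coeff_mul] at this
  exact this

lemma conv_swap {P : Type*} {N : P → ℕ} (hN : ∀ p, 2 ≤ N p) (hf : FinB (Nm N))
    (F : (P →₀ ℕ) → (P →₀ ℕ) → ℝ) (x : ℝ) :
    ∑ d ∈ BfS (Nm N) x, ∑ m ∈ BfS (Nm N) (x / Nm N d), F d m =
      ∑ n ∈ BfS (Nm N) x, ∑ q ∈ Finset.HasAntidiagonal.antidiagonal n, F q.1 q.2 := by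
  rw [Finset.sum_sigma', Finset.sum_sigma']
  have hp : ∀ m, (1:ℝ) ≤ Nm N m := fun m => by exact_mod_cast Nm_pos hN m
  refine Finset.sum_bij' (fun q _ => ⟨q.1 + q.2, (q.1, q.2)⟩) (fun q _ => ⟨q.2.1, q.2.2⟩) ?_ ?_ ?_ ?_ ?_
  · rintro ⟨a, b⟩ h
    simp only [Finset.mem_sigma, mem_BfS hf, Finset.HasAntidiagonal.mem_antidiagonal] at h ⊢
    refine ⟨?_, trivial⟩
    rw [Nm_add]; push_cast
    rw [le_div_iff₀ (by linarith [hp a])] at h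
    linarith
  · rintro ⟨n, a, b⟩ h
    simp only [Finset.mem_sigma, mem_BfS hf, Finset.HasAntidiagonal.mem_antidiagonal] at h ⊢
    obtain ⟨h, rfl⟩ := h
    rw [Nm_add] at h; push_cast at h
    rw [le_div_iff₀ (by linarith [hp a])]
    refine ⟨?_, by linarith⟩
    nlinarith [hp a, hp b]
  · rintro ⟨a, b⟩ h
    rfl
  · rintro ⟨n, a, b⟩ h
    simp only [Finset.mem_sigma, mem_BfS hf, Finset.HasAntidiagonal.mem_antidiagonal] at h ⊢
    obtain ⟨h, rfl⟩ := h
    rfl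
  · rintro ⟨a, b⟩ h
    rfl

lemma fin_of_star {P : Type*} {N : P → ℕ} {κ θ : ℝ} (hs : StarCond N κ θ) : FinB (Nm N) := by
  obtain ⟨hκ, hθ0, hθ, hO⟩ := hs
  intro x₀
  by_contra hinf
  obtain ⟨C, hC⟩ := hO.bound
  have hT : Tendsto (fun x : ℝ => κ * x ^ (1 - θ)) atTop atTop :=
    (tendsto_rpow_atTop (by linarith)).const_mul_atTop hκ
  obtain ⟨x, hx1, hx2, hx3, hx4⟩ := (hC.and ((eventually_ge_atTop x₀).and
    ((eventually_gt_atTop 0).and (hT.eventually_gt_atTop C)))).exists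
  have h0 : {m : P →₀ ℕ | (Nm N m : ℝ) ≤ x}.ncard = 0 := by
    apply Set.Infinite.ncard
    intro hfin
    exact hinf (hfin.subset fun m hm => le_trans hm hx2)
  rw [h0] at hx1
  simp only [Nat.cast_zero, zero_sub, norm_neg, Real.norm_eq_abs] at hx1
  rw [abs_of_pos (by positivity), abs_of_pos (by positivity)] at hx1
  have : x = x ^ (1 - θ) * x ^ θ := by
    rw [← Real.rpow_add hx3]; simp
  rw [this] at hx1
  have hp : 0 < x ^ θ := by positivity
  have h5 : κ * (x ^ (1 - θ) * x ^ θ) ≤ C * x ^ θ := by rw [← this]; rw [← this] at hx1; exact hx1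
  have : κ * x ^ (1 - θ) ≤ C := by
    by_contra hlt
    push Not at hlt
    nlinarith
  linarith

lemma card_bound {P : Type*} {N : P → ℕ} {κ θ : ℝ} (hs : StarCond N κ θ) :
    ∃ C : ℝ, 0 ≤ C ∧ ∀ x : ℝ, 1 ≤ x → |((BfS (Nm N) x).card : ℝ) - κ * x| ≤ C * x ^ θ := by
  have hf := fin_of_star hs
  obtain ⟨hκ, hθ0, hθ, hO⟩ := hs
  obtain ⟨C, hC⟩ := hO.bound
  obtain ⟨x₀, hx₀⟩ := eventually_atTop.1 hC
  have hcard : ∀ x : ℝ, {m : P →₀ ℕ | (Nm N m : ℝ) ≤ x}.ncard = (BfS (Nm N) x).card := by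
    intro x
    rw [← Set.ncard_coe_finset]
    congr 1
    ext m
    simp [mem_BfS hf]
  refine ⟨|C| + ((BfS (Nm N) x₀).card + κ * |x₀|), by positivity, ?_⟩
  intro x hx
  have hx1 : 1 ≤ x ^ θ := Real.one_le_rpow hx hθ0
  rcases le_total x₀ x with h | h
  · have := hx₀ x h
    rw [hcard, Real.norm_eq_abs, Real.norm_eq_abs, abs_of_pos (by positivity : 0 < x ^ θ)] at this
    refine this.trans ?_
    apply mul_le_mul_of_nonneg_right _ (by positivity)
    have : 0 ≤ κ * |x₀| := by positivity
    have h2 : (0:ℝ) ≤ (BfS (Nm N) x₀).card := by positivity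
    linarith [le_abs_self C]
  · have h1 : ((BfS (Nm N) x).card : ℝ) ≤ (BfS (Nm N) x₀).card := by
      norm_cast
      apply Finset.card_le_card
      intro m
      rw [mem_BfS hf, mem_BfS hf]
      intro hm; linarith
    have h2 : |((BfS (Nm N) x).card : ℝ) - κ * x| ≤ (BfS (Nm N) x₀).card + κ * |x₀| := by
      have h3 : κ * x ≤ κ * |x₀| := mul_le_mul_of_nonneg_left (h.trans (le_abs_self _)) hκ.le
      have h4 : (0:ℝ) ≤ (BfS (Nm N) x).card := by positivity
      have h5 : 0 ≤ κ * x := by positivity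
      rw [abs_le]; constructor <;> linarith
    refine h2.trans ?_
    have : (0:ℝ) ≤ (BfS (Nm N) x₀).card + κ * |x₀| := by positivity
    nlinarith [abs_nonneg C]

lemma card_lin {P : Type*} {N : P → ℕ} {κ θ : ℝ} (hs : StarCond N κ θ) :
    ∃ C : ℝ, 0 ≤ C ∧ ∀ x : ℝ, 1 ≤ x → ((BfS (Nm N) x).card : ℝ) ≤ C * x := by
  obtain ⟨C, hC0, hC⟩ := card_bound hs
  obtain ⟨hκ, hθ0, hθ, hO⟩ := hs
  refine ⟨κ + C, by linarith, fun x hx => ?_⟩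
  have h1 := (abs_le.1 (hC x hx)).2
  have : x ^ θ ≤ x := by
    calc x ^ θ ≤ x ^ (1:ℝ) := Real.rpow_le_rpow_of_exponent_le hx hθ.le
      _ = x := Real.rpow_one x
  nlinarith

lemma asymV {ι : Type*} {ν : ι → ℕ} (hf : FinB ν) (h1 : ∀ i, 1 ≤ ν i) (C κ θ : ℝ)
    (hE : ∀ x : ℝ, 1 ≤ x → |((BfS ν x).card : ℝ) - κ * x| ≤ C * x ^ θ) (hθ : θ < 1) :
    ∃ b C' : ℝ, ∀ x : ℝ, 1 ≤ x →
      |∑ i ∈ BfS ν x, (ν i : ℝ)⁻¹ - κ * Real.log x - b| ≤ C' * x ^ (θ - 1) := by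
  obtain ⟨b, C', h⟩ := abel_asym hf h1 C κ θ 0 1 hE (by linarith) (fun t => t⁻¹)
    (fun t => -(t ^ 2)⁻¹) (fun t => - Real.log t) (fun t ht => hasDerivAt_inv (by linarith))
    (by
      apply ContinuousOn.neg
      apply ContinuousOn.inv₀ (by fun_prop)
      intro t ht
      have : (1:ℝ) ≤ t := ht
      positivity) zero_le_one
    (fun t ht => by
      have : (0:ℝ) < t := by linarith
      rw [abs_of_pos (by positivity), zero_sub, Real.rpow_neg_one, one_mul])
    (fun t ht => by
      have : (0:ℝ) < t := by linarith
      rw [abs_neg, abs_of_pos (by positivity), zero_sub, Real.rpow_neg this.le, one_mul]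
      norm_cast)
    (fun t ht => by
      have : (0:ℝ) < t := by linarith
      refine HasDerivAt.congr_deriv ((Real.hasDerivAt_log this.ne').neg) ?_
      field_simp)
  refine ⟨b + κ, C', fun x hx => ?_⟩
  have := h x hx
  have hx0 : (0:ℝ) < x := by linarith
  rw [add_zero, mul_assoc, mul_inv_cancel₀ hx0.ne'] at this
  convert this using 2
  ring

lemma asymU {ι : Type*} {ν : ι → ℕ} (hf : FinB ν) (h1 : ∀ i, 1 ≤ ν i) (C κ θ σ : ℝ)
    (hE : ∀ x : ℝ, 1 ≤ x → |((BfS ν x).card : ℝ) - κ * x| ≤ C * x ^ θ) (hσ : 0 < σ)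
    (hθ : θ + σ < 1) :
    ∃ b C' : ℝ, ∀ x : ℝ, 1 ≤ x →
      |∑ i ∈ BfS ν x, Real.log (ν i) * (ν i : ℝ)⁻¹ - κ / 2 * Real.log x ^ 2 - b|
        ≤ C' * x ^ (θ + σ - 1) := by
  have hlog : ∀ t : ℝ, 1 ≤ t → Real.log t ≤ t ^ σ / σ := fun t ht =>
    Real.log_le_rpow_div (by linarith) hσ
  obtain ⟨b, C', h⟩ := abel_asym hf h1 C κ θ σ (1 + 1 / σ) hE hθ (fun t => Real.log t * t⁻¹)
    (fun t => (1 - Real.log t) * (t ^ 2)⁻¹) (fun t => Real.log t - Real.log t ^ 2 / 2)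
    (fun t ht => by
      have h0 : (0:ℝ) < t := by linarith
      refine HasDerivAt.congr_deriv ((Real.hasDerivAt_log h0.ne').mul (hasDerivAt_inv h0.ne')) ?_
      try norm_num
      field_simp
      try ring)
    (by
      apply ContinuousOn.mul
      · apply ContinuousOn.sub continuousOn_const
        apply Real.continuousOn_log.mono
        intro t ht
        have : (1:ℝ) ≤ t := ht
        simp only [Set.mem_compl_iff, Set.mem_singleton_iff]; linarith
      · apply ContinuousOn.inv₀ (by fun_prop)
        intro t ht
        have : (1:ℝ) ≤ t := ht
        positivity) (by positivity)
    (fun t ht => by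
      have h0 : (0:ℝ) < t := by linarith
      have hl := Real.log_nonneg ht
      rw [abs_of_nonneg (by positivity), Real.rpow_sub_one h0.ne', div_eq_mul_inv (t ^ σ), ← mul_assoc]
      apply mul_le_mul_of_nonneg_right _ (by positivity)
      have := hlog t ht
      have h5 : 0 < t ^ σ := by positivity
      have : (1 + 1 / σ) * t ^ σ = t ^ σ + t ^ σ / σ := by ring
      linarith)
    (fun t ht => by
      have h0 : (0:ℝ) < t := by linarith
      have hl := Real.log_nonneg ht
      rw [abs_mul, abs_of_pos (by positivity : 0 < (t ^ 2)⁻¹), Real.rpow_sub h0, Real.rpow_two,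
        div_eq_mul_inv (t ^ σ), ← mul_assoc]
      apply mul_le_mul_of_nonneg_right _ (by positivity)
      have := hlog t ht
      have h5 : 1 ≤ t ^ σ := Real.one_le_rpow ht hσ.le
      have : (1 + 1 / σ) * t ^ σ = t ^ σ + t ^ σ / σ := by ring
      rw [abs_le]; constructor <;> linarith)
    (fun t ht => by
      have h0 : (0:ℝ) < t := by linarith
      refine HasDerivAt.congr_deriv ((Real.hasDerivAt_log h0.ne').sub (((Real.hasDerivAt_log h0.ne').pow 2).div_const 2)) ?_
      try norm_num
      field_simp
      try ring)
  refine ⟨b, C', fun x hx => ?_⟩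
  have := h x hx
  have hx0 : (0:ℝ) < x := by linarith
  convert this using 2
  field_simp
  ring

lemma mertens1M {P : Type*} {N : P → ℕ} {κ θ : ℝ} (hN : ∀ p, 2 ≤ N p) (hs : StarCond N κ θ) :
    ∃ C : ℝ, ∀ x : ℝ, 1 ≤ x →
      |∑ m ∈ BfS (Nm N) x, lamM N m / Nm N m - Real.log x| ≤ C := by
  have hf := fin_of_star hs
  have h1 : ∀ m, 1 ≤ Nm N m := Nm_pos hN
  obtain ⟨C, hC0, hE⟩ := card_bound hs
  obtain ⟨CL, hCL0, hCL⟩ := card_lin hs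
  obtain ⟨hκ, hθ0, hθ, _⟩ := hs
  obtain ⟨σ, hσ⟩ : ∃ σ, σ = (1 - θ) / 2 := ⟨_, rfl⟩
  have hσ0 : 0 < σ := by rw [hσ]; linarith
  have hη1 : θ + σ < 1 := by rw [hσ]; linarith
  obtain ⟨b1, C1, hV⟩ := asymV hf h1 C κ θ hE hθ
  obtain ⟨b2, C2, hU⟩ := asymU hf h1 C κ θ σ hE hσ0 hη1
  obtain ⟨β, hβ⟩ : ∃ β, β = b1 / κ := ⟨_, rfl⟩
  obtain ⟨c, hc⟩ : ∃ c, c = (2 * b2 + β * b1) / κ := ⟨_, rfl⟩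
  set η := θ + σ with hη
  let F : ℝ → ℝ := fun y => ∑ m ∈ BfS (Nm N) y,
    ((y / Nm N m) * (2 * Real.log (Nm N m) - Real.log y + β) - c)
  set C3 := 2 * C2 + C1 / σ + |β| * C1 + |c| * C with hC3
  have hC1 : 0 ≤ C1 := by
    have := hV 1 le_rfl
    rw [Real.one_rpow] at this
    linarith [abs_nonneg (∑ i ∈ BfS (Nm N) 1, (Nm N i : ℝ)⁻¹ - κ * Real.log 1 - b1)]
  have hF : ∀ y, 1 ≤ y → |F y| ≤ C3 * y ^ η := by
    intro y hy
    have hy0 : (0:ℝ) < y := by linarith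
    set V := ∑ i ∈ BfS (Nm N) y, (Nm N i : ℝ)⁻¹ with hVd
    set U := ∑ i ∈ BfS (Nm N) y, Real.log (Nm N i) * (Nm N i : ℝ)⁻¹ with hUd
    set I := ((BfS (Nm N) y).card : ℝ) with hId
    have hFe : F y = 2 * y * U - y * Real.log y * V + β * y * V - c * I := by
      simp only [F, hVd, hUd, hId]
      rw [Finset.sum_sub_distrib, Finset.sum_const, nsmul_eq_mul, Finset.mul_sum, Finset.mul_sum,
        Finset.mul_sum, ← Finset.sum_sub_distrib, ← Finset.sum_add_distrib, mul_comm c]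
      congr 1
      apply Finset.sum_congr rfl
      intro m _
      rw [div_eq_mul_inv]; ring
    have hVy := hV y hy
    have hUy := hU y hy
    have hEy := hE y hy
    set e1 := V - κ * Real.log y - b1
    set e2 := U - κ / 2 * Real.log y ^ 2 - b2
    set E := I - κ * y
    have hFe2 : F y = 2 * (y * e2) - Real.log y * (y * e1) + β * (y * e1) - c * E := by
      rw [hFe]
      simp only [e1, e2, E]
      have h1 : b1 = β * κ := by rw [hβ]; field_simp
      have h2 : 2 * b2 + β * b1 = c * κ := by rw [hc]; field_simp
      linear_combination y * h2 - (y * Real.log y) * h1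
    have hyη : y * y ^ (η - 1) = y ^ η := by
      rw [Real.rpow_sub_one hy0.ne']; field_simp
    have hyθ : y * y ^ (θ - 1) = y ^ θ := by
      rw [Real.rpow_sub_one hy0.ne']; field_simp
    have hle : y ^ θ ≤ y ^ η := Real.rpow_le_rpow_of_exponent_le hy (by linarith)
    have a2 : |y * e2| ≤ C2 * y ^ η := by
      rw [abs_mul, abs_of_pos hy0, ← hyη]
      have := mul_le_mul_of_nonneg_left hUy hy0.le
      linarith
    have a1 : |y * e1| ≤ C1 * y ^ θ := by
      rw [abs_mul, abs_of_pos hy0, ← hyθ]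
      have := mul_le_mul_of_nonneg_left hVy hy0.le
      linarith
    have a3 : |Real.log y * (y * e1)| ≤ C1 / σ * y ^ η := by
      rw [abs_mul, abs_of_nonneg (Real.log_nonneg hy)]
      calc Real.log y * |y * e1| ≤ (y ^ σ / σ) * (C1 * y ^ θ) :=
            mul_le_mul (Real.log_le_rpow_div hy0.le hσ0) a1 (abs_nonneg _) (by positivity)
        _ = C1 / σ * (y ^ θ * y ^ σ) := by ring
        _ = _ := by rw [← Real.rpow_add hy0]
    have a4 : |β * (y * e1)| ≤ |β| * C1 * y ^ η := by
      rw [abs_mul, mul_assoc]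
      apply mul_le_mul_of_nonneg_left _ (abs_nonneg _)
      exact a1.trans (mul_le_mul_of_nonneg_left hle hC1)
    have a5 : |c * E| ≤ |c| * C * y ^ η := by
      rw [abs_mul, mul_assoc]
      apply mul_le_mul_of_nonneg_left _ (abs_nonneg _)
      exact hEy.trans (mul_le_mul_of_nonneg_left hle hC0)
    rw [hFe2, hC3]
    rw [abs_le] at *
    constructor <;> linarith
  have hC30 : 0 ≤ C3 := by
    have := hF 1 le_rfl
    rw [Real.one_rpow] at this
    linarith [abs_nonneg (F 1)]
  have hη0 : 0 < η := by linarith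
  refine ⟨|β| + |c| + C3 * (CL + η * CL / (1 - η)), fun x hx => ?_⟩
  have hx0 : (0:ℝ) < x := by linarith
  have hp : ∀ m, (1:ℝ) ≤ Nm N m := fun m => by exact_mod_cast Nm_pos hN m
  have hsum : ∑ d ∈ BfS (Nm N) x, muM d * F (x / Nm N d) =
      x * ∑ m ∈ BfS (Nm N) x, lamM N m / Nm N m - x * Real.log x + β * x - c := by
    simp only [F, Finset.mul_sum]
    rw [conv_swap hN hf (fun d m => muM d * ((x / Nm N d / Nm N m) *
      (2 * Real.log (Nm N m) - Real.log (x / Nm N d) + β) - c))]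
    have hin : ∀ n ∈ BfS (Nm N) x, ∑ q ∈ Finset.HasAntidiagonal.antidiagonal n,
        muM q.1 * ((x / Nm N q.1 / Nm N q.2) *
          (2 * Real.log (Nm N q.2) - Real.log (x / Nm N q.1) + β) - c) =
        x * (lamM N n / Nm N n) + if n = 0 then (- x * Real.log x + β * x - c) else 0 := by
      intro n _
      have hq : ∀ q ∈ Finset.HasAntidiagonal.antidiagonal n,
        muM q.1 * ((x / Nm N q.1 / Nm N q.2) *
          (2 * Real.log (Nm N q.2) - Real.log (x / Nm N q.1) + β) - c) =
        x / Nm N n * (muM q.1 * Real.log (Nm N q.2)) + muM q.1 *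
          (x / Nm N n * (Real.log (Nm N n) - Real.log x + β) - c) := by
        rintro ⟨a, b⟩ h
        rw [Finset.HasAntidiagonal.mem_antidiagonal] at h
        simp only at h ⊢
        rw [← h, Nm_add]
        push_cast
        have ha := hp a
        have hb := hp b
        rw [Real.log_div (by positivity) (by positivity), Real.log_mul (by positivity) (by positivity),
          div_div]
        ring
      rw [Finset.sum_congr rfl hq, Finset.sum_add_distrib, ← Finset.mul_sum, ← Finset.sum_mul,
        mu_log hN, mu_conv]
      congr 1
      · ring
      · split_ifs with h0
        · rw [h0]
          have : Nm N (0 : P →₀ ℕ) = 1 := by simp [Nm]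
          rw [this]; simp; ring
        · ring
    rw [Finset.sum_congr rfl hin, Finset.sum_add_distrib, Finset.sum_ite_eq', if_pos]
    · ring
    · rw [mem_BfS hf]
      have : Nm N (0 : P →₀ ℕ) = 1 := by simp [Nm]
      rw [this]; simpa using hx
  have hbound : |∑ d ∈ BfS (Nm N) x, muM d * F (x / Nm N d)| ≤
      C3 * (CL + η * CL / (1 - η)) * x := by
    have hps := powsum hf h1 CL hCL η hη0 (by linarith) x hx
    calc _ ≤ ∑ d ∈ BfS (Nm N) x, |muM d * F (x / Nm N d)| := Finset.abs_sum_le_sum_abs _ _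
      _ ≤ ∑ d ∈ BfS (Nm N) x, C3 * x ^ η * (Nm N d : ℝ) ^ (-η) := by
          apply Finset.sum_le_sum
          intro d hd
          rw [mem_BfS hf] at hd
          have hd0 : (0:ℝ) < Nm N d := by linarith [hp d]
          have := hF (x / Nm N d) ((one_le_div hd0).2 hd)
          rw [abs_mul, Real.rpow_neg hd0.le, mul_assoc, ← div_eq_mul_inv,
            ← Real.div_rpow hx0.le hd0.le]
          calc _ ≤ 1 * |F (x / Nm N d)| := mul_le_mul_of_nonneg_right (abs_muM d) (abs_nonneg _)
            _ ≤ _ := by rw [one_mul]; exact this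
      _ = C3 * x ^ η * ∑ d ∈ BfS (Nm N) x, (Nm N d : ℝ) ^ (-η) := by rw [Finset.mul_sum]
      _ ≤ C3 * x ^ η * ((CL + η * CL / (1 - η)) * x ^ (1 - η)) := by
          apply mul_le_mul_of_nonneg_left _ (by positivity)
          refine hps.trans ?_
          rw [add_mul CL]
          have : η * CL / (1 - η) * x ^ (1 - η) = η * CL * (x ^ (1 - η) / (1 - η)) := by ring
          rw [this]
          have h6 : (x ^ (1 - η) - 1) / (1 - η) ≤ x ^ (1 - η) / (1 - η) :=
            div_le_div_of_nonneg_right (by linarith) (by linarith)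
          have := mul_le_mul_of_nonneg_left h6 (mul_nonneg hη0.le hCL0)
          linarith
      _ = C3 * (CL + η * CL / (1 - η)) * (x ^ η * x ^ (1 - η)) := by ring
      _ = _ := by rw [← Real.rpow_add hx0]; simp
  rw [hsum] at hbound
  set W := ∑ m ∈ BfS (Nm N) x, lamM N m / Nm N m
  have h9 : x * |W - Real.log x| ≤ x * (|β| + |c| + C3 * (CL + η * CL / (1 - η))) := by
    rw [← abs_of_pos hx0, ← abs_mul, abs_of_pos hx0]
    have hb1 : |β * x| ≤ |β| * x := by rw [abs_mul, abs_of_pos hx0]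
    have hc1 : |c| ≤ |c| * x := le_mul_of_one_le_right (abs_nonneg _) hx
    have hc2 := abs_le.1 (le_refl |c|)
    have hb2 := abs_le.1 hb1
    have hb3 := abs_le.1 hbound
    rw [abs_le]
    constructor <;> linarith
  exact le_of_mul_le_mul_left h9 hx0

lemma finP {P : Type*} {N : P → ℕ} (hf : FinB (Nm N)) : FinB N := by
  intro x
  have : {p | (N p : ℝ) ≤ x} = (fun p => Finsupp.single p 1) ⁻¹' {m : P →₀ ℕ | (Nm N m : ℝ) ≤ x} := by
    ext p
    simp only [Set.mem_ofPred_eq, Set.mem_preimage, Nm_single, pow_one]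
  rw [this]
  exact (hf x).preimage (Finsupp.single_left_injective one_ne_zero).injOn

lemma cardP {P : Type*} {N : P → ℕ} (hf : FinB (Nm N)) (x : ℝ) :
    (BfS N x).card ≤ (BfS (Nm N) x).card := by
  apply Finset.card_le_card_of_injOn (fun p => Finsupp.single p 1)
  · intro p hp
    simp only [Finset.mem_coe, mem_BfS hf, mem_BfS (finP hf), Nm_single, pow_one] at hp ⊢
    exact hp
  · exact (Finsupp.single_left_injective one_ne_zero).injOn

lemma summableP {P : Type*} {N : P → ℕ} {κ θ : ℝ} (hN : ∀ p, 2 ≤ N p) (hs : StarCond N κ θ)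
    (s : ℝ) (h1s : 1 < s) : Summable (fun p => (N p : ℝ) ^ (-s)) := by
  have hf := fin_of_star hs
  obtain ⟨C, hC0, hC⟩ := card_lin hs
  apply summable_of_sum_le (c := C + s * C * (1 / (s - 1)))
  · intro p; positivity
  · intro u
    set X : ℝ := 1 + ∑ p ∈ u, (N p : ℝ) with hX
    have hX1 : 1 ≤ X := by
      have : 0 ≤ ∑ p ∈ u, (N p : ℝ) := Finset.sum_nonneg fun p _ => by positivity
      linarith
    have hsub : u ⊆ BfS N X := by
      intro p hp
      rw [mem_BfS (finP hf)]
      have := Finset.single_le_sum (f := fun p => (N p : ℝ)) (fun p _ => by positivity) hp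
      linarith
    refine (Finset.sum_le_sum_of_subset_of_nonneg hsub (fun p _ _ => by positivity)).trans ?_
    refine (powsum (finP hf) (fun p => by linarith [hN p]) C (fun x hx =>
      le_trans (by exact_mod_cast cardP hf x) (hC x hx)) s (by linarith) (by linarith) X hX1).trans ?_
    have h3 : X ^ (1 - s) ≤ 1 := Real.rpow_le_one_of_one_le_of_nonpos hX1 (by linarith)
    have h4 : 0 ≤ X ^ (1 - s) := by positivity
    have h5 : (X ^ (1 - s) - 1) / (1 - s) ≤ 1 / (s - 1) := by
      rw [← neg_div_neg_eq, neg_sub, neg_sub]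
      exact div_le_div_of_nonneg_right (by linarith) (by linarith)
    have h6 := mul_le_mul_of_nonneg_left h5 (mul_nonneg (by linarith : 0 ≤ s) hC0)
    have h7 := mul_le_mul_of_nonneg_left h3 hC0
    linarith

lemma lamM_nonneg {P : Type*} {N : P → ℕ} (m : P →₀ ℕ) : 0 ≤ lamM N m := by
  unfold lamM
  apply Finset.sum_nonneg
  intro p _
  split_ifs
  · exact Real.log_natCast_nonneg _
  · exact le_rfl

lemma lamM_single {P : Type*} {N : P → ℕ} (p : P) (k : ℕ) (hk : k ≠ 0) :
    lamM N (Finsupp.single p k) = Real.log (N p) := by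
  have : (Finsupp.single p k).support = {p} := by
    ext r; simp only [Finsupp.mem_support_iff, Finsupp.single_apply, Finset.mem_singleton]
    split_ifs with hr <;> simp [hk, hr, eq_comm]
  unfold lamM
  rw [this]; simp

lemma lamM_ne {P : Type*} {N : P → ℕ} (m : P →₀ ℕ) (h : lamM N m ≠ 0) :
    ∃ p k, k ≠ 0 ∧ m = Finsupp.single p k := by
  unfold lamM at h
  obtain ⟨p, hp, hne⟩ := Finset.exists_ne_zero_of_sum_ne_zero h
  have hs : m.support = {p} := by
    by_contra h2
    rw [if_neg h2] at hne
    exact hne rfl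
  exact ⟨p, m p, Finsupp.mem_support_iff.1 hp, (Finsupp.support_subset_singleton).1 hs.le⟩

lemma mertens1P {P : Type*} {N : P → ℕ} {κ θ : ℝ} (hN : ∀ p, 2 ≤ N p) (hs : StarCond N κ θ) :
    ∃ C : ℝ, ∀ x : ℝ, 1 ≤ x →
      |∑ p ∈ BfS N x, Real.log (N p) / N p - Real.log x| ≤ C := by
  have hf := fin_of_star hs
  obtain ⟨C, hC⟩ := mertens1M hN hs
  have hN2 : ∀ p, (2:ℝ) ≤ N p := fun p => by exact_mod_cast hN p
  have hsq : Summable (fun p => Real.log (N p) / (N p : ℝ) ^ 2) := by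
    refine Summable.of_nonneg_of_le ?_ ?_ ((summableP hN hs (3/2) (by norm_num)).mul_left 2)
    · intro p
      exact div_nonneg (Real.log_natCast_nonneg _) (by positivity)
    · intro p
      have h0 : (0:ℝ) < N p := by linarith [hN2 p]
      have := Real.log_le_rpow_div h0.le (by norm_num : (0:ℝ) < 1/2)
      rw [div_le_iff₀ (by positivity), mul_assoc, ← Real.rpow_natCast, ← Real.rpow_add h0]
      norm_num at this ⊢
      linarith
  have hg : Summable (fun q : P × ℕ => (Real.log (N q.1) / (N q.1 : ℝ) ^ 2) * (1/2 : ℝ) ^ q.2) := by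
    apply Summable.mul_of_nonneg hsq summable_geometric_two
    · intro p
      exact div_nonneg (Real.log_natCast_nonneg _) (by positivity)
    · intro k; positivity
  have hg0 : ∀ q : P × ℕ, 0 ≤ (Real.log (N q.1) / (N q.1 : ℝ) ^ 2) * (1/2 : ℝ) ^ q.2 := by
    intro q
    exact mul_nonneg (div_nonneg (Real.log_natCast_nonneg _) (by positivity)) (by positivity)
  set T := ∑' q : P × ℕ, (Real.log (N q.1) / (N q.1 : ℝ) ^ 2) * (1/2 : ℝ) ^ q.2 with hT
  refine ⟨C + T, fun x hx => ?_⟩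
  let im : Finset (P →₀ ℕ) := (BfS N x).image (fun p => Finsupp.single p 1)
  have him : im ⊆ BfS (Nm N) x := by
    intro m hm
    obtain ⟨p, hp, rfl⟩ := Finset.mem_image.1 hm
    rw [mem_BfS (finP hf)] at hp
    rw [mem_BfS hf, Nm_single, pow_one]; exact hp
  have hsplit := Finset.sum_sdiff (f := fun m => lamM N m / (Nm N m : ℝ)) him
  have himsum : ∑ m ∈ im, lamM N m / (Nm N m : ℝ) = ∑ p ∈ BfS N x, Real.log (N p) / N p := by
    rw [Finset.sum_image (Finsupp.single_left_injective one_ne_zero).injOn]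
    apply Finset.sum_congr rfl
    intro p _
    rw [lamM_single p 1 one_ne_zero, Nm_single, pow_one]
  let e : P × ℕ → (P →₀ ℕ) := fun q => Finsupp.single q.1 (q.2 + 2)
  have he : Function.Injective e := by
    rintro ⟨p, k⟩ ⟨p', k'⟩ h
    simp only [e] at h
    rw [Finsupp.single_eq_single_iff] at h
    rcases h with ⟨h1, h2⟩ | ⟨h1, h2⟩
    · exact Prod.ext h1 (by simp only; omega)
    · omega
  have hrest : ∑ m ∈ BfS (Nm N) x \ im, lamM N m / (Nm N m : ℝ) ≤ T := by
    rw [← Finset.sum_preimage e _ he.injOn]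
    · refine le_trans (Finset.sum_le_sum ?_) (hg.sum_le_tsum _ (fun q _ => hg0 q))
      rintro ⟨p, k⟩ _
      simp only [e]
      rw [lamM_single p _ (by omega), Nm_single, div_mul, one_div, inv_pow]
      push_cast
      have h2 := hN2 p
      have hlog : 0 ≤ Real.log (N p) := Real.log_natCast_nonneg _
      apply div_le_div_of_nonneg_left hlog (by positivity)
      rw [div_inv_eq_mul, pow_add, mul_comm]
      exact mul_le_mul_of_nonneg_right (pow_le_pow_left₀ (by norm_num) h2 k) (by positivity)
    · intro m hm hr
      by_contra hne
      have hl : lamM N m ≠ 0 := by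
        intro h; rw [h, zero_div] at hne; exact hne rfl
      obtain ⟨p, k, hk, rfl⟩ := lamM_ne m hl
      rw [Finset.mem_sdiff, mem_BfS hf] at hm
      by_cases hk1 : k = 1
      · apply hm.2
        rw [Finset.mem_image]
        refine ⟨p, ?_, by rw [hk1]⟩
        rw [mem_BfS (finP hf)]
        have := hm.1
        rw [hk1, Nm_single, pow_one] at this
        exact this
      · apply hr
        refine ⟨(p, k - 2), ?_⟩
        simp only [e]
        congr 1; omega
  have hrest0 : 0 ≤ ∑ m ∈ BfS (Nm N) x \ im, lamM N m / (Nm N m : ℝ) :=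
    Finset.sum_nonneg fun m _ => div_nonneg (lamM_nonneg m) (by positivity)
  have h1 := hC x hx
  rw [← hsplit, himsum] at h1
  rw [abs_le] at h1 ⊢
  constructor <;> linarith

lemma mertens2 {P : Type*} {N : P → ℕ} {κ θ : ℝ} (hN : ∀ p, 2 ≤ N p) (hs : StarCond N κ θ)
    (A : ℝ) (hA : IsMertens N A) :
    ∃ C : ℝ, ∀ x : ℝ, 2 ≤ x →
      |∑ p ∈ BfS N x, 1 / (N p : ℝ) - Real.log (Real.log x) - A| ≤ C / Real.log x := by
  have hf := finP (fin_of_star hs)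
  obtain ⟨C, hC⟩ := mertens1P hN hs
  have hN2 : ∀ p, (2:ℝ) ≤ N p := fun p => by exact_mod_cast hN p
  have hC0 : 0 ≤ C := (abs_nonneg _).trans (hC 1 le_rfl)
  refine ⟨2 * C, fun x hx => ?_⟩
  have hlogpos : ∀ t, 2 ≤ t → 0 < Real.log t := fun t ht => Real.log_pos (by linarith)
  have key : ∀ y, x ≤ y → |(∑ p ∈ BfS N y, 1 / (N p : ℝ) - Real.log (Real.log y)) -
      (∑ p ∈ BfS N x, 1 / (N p : ℝ) - Real.log (Real.log x))| ≤ 2 * C / Real.log x := by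
    intro y hxy
    set f' : ℝ → ℝ := fun t => -(t⁻¹) / Real.log t ^ 2 with hf'
    have hd : ∀ t ∈ Set.Icc x y, HasDerivAt (fun t => (Real.log t)⁻¹) (f' t) t := by
      intro t ht
      have h2 : 2 ≤ t := hx.trans ht.1
      exact (Real.hasDerivAt_log (by linarith)).inv (hlogpos t h2).ne'
    have hclog : ContinuousOn Real.log (Set.Icc x y) := by
      apply Real.continuousOn_log.mono
      intro t ht
      simp only [Set.mem_compl_iff, Set.mem_singleton_iff]; linarith [ht.1]
    have hc : ContinuousOn f' (Set.Icc x y) := by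
      apply ContinuousOn.div
      · apply ContinuousOn.neg
        apply ContinuousOn.inv₀ continuousOn_id
        intro t ht
        simp only [id]; linarith [ht.1]
      · exact hclog.pow 2
      · intro t ht
        have := hlogpos t (hx.trans ht.1)
        positivity
    have ab := abel_gen hf (fun p => Real.log (N p) / N p) (fun t => (Real.log t)⁻¹) f' x y
      (by linarith) hxy hd hc
    have hint := abel_integrable hf (fun p => Real.log (N p) / N p) f' x y (by linarith) hxy hc
    have hsimp : ∀ z : ℝ, ∑ p ∈ BfS N z, (Real.log (N p))⁻¹ * (Real.log (N p) / N p) =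
        ∑ p ∈ BfS N z, 1 / (N p : ℝ) := by
      intro z
      apply Finset.sum_congr rfl
      intro p _
      have := hlogpos _ (hN2 p)
      field_simp
    simp only [hsimp] at ab
    set R : ℝ → ℝ := fun t => ∑ p ∈ BfS N t, Real.log (N p) / N p with hR
    have hI1 : ∫ t in x..y, f' t * Real.log t = -(Real.log (Real.log y) - Real.log (Real.log x)) := by
      rw [neg_sub', sub_neg_eq_add]
      have := intervalIntegral.integral_eq_sub_of_hasDerivAt (a := x) (b := y)
        (f := fun t => - Real.log (Real.log t)) (f' := fun t => f' t * Real.log t) ?_ ?_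
      · rw [this]; ring
      · intro t ht
        rw [Set.uIcc_of_le hxy] at ht
        have h2 : 2 ≤ t := hx.trans ht.1
        have h3 := hlogpos t h2
        refine HasDerivAt.congr_deriv (((Real.hasDerivAt_log (by linarith)).log h3.ne').neg) ?_
        simp only [hf']
        field_simp
      · apply ContinuousOn.intervalIntegrable
        rw [Set.uIcc_of_le hxy]
        exact hc.mul hclog
    have hintl : IntervalIntegrable (fun t => f' t * Real.log t) volume x y := by
      apply ContinuousOn.intervalIntegrable
      rw [Set.uIcc_of_le hxy]
      exact hc.mul hclog
    have hI2 : ∫ t in x..y, f' t * R t = -(Real.log (Real.log y) - Real.log (Real.log x)) +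
        ∫ t in x..y, f' t * (R t - Real.log t) := by
      have : ∫ t in x..y, f' t * (R t - Real.log t) =
          (∫ t in x..y, f' t * R t) - ∫ t in x..y, f' t * Real.log t := by
        rw [← intervalIntegral.integral_sub hint hintl]
        congr 1
        ext t; ring
      rw [this, hI1]; ring
    have hf'int : ∫ t in x..y, C * (-f' t) = C * ((Real.log x)⁻¹ - (Real.log y)⁻¹) := by
      rw [intervalIntegral.integral_const_mul, intervalIntegral.integral_neg]
      rw [intervalIntegral.integral_eq_sub_of_hasDerivAt (f := fun t => (Real.log t)⁻¹)]
      · ring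
      · intro t ht
        rw [Set.uIcc_of_le hxy] at ht
        exact hd t ht
      · apply ContinuousOn.intervalIntegrable
        rw [Set.uIcc_of_le hxy]
        exact hc
    have hI3 : |∫ t in x..y, f' t * (R t - Real.log t)| ≤
        C * ((Real.log x)⁻¹ - (Real.log y)⁻¹) := by
      rw [← hf'int, ← Real.norm_eq_abs]
      apply intervalIntegral.norm_integral_le_of_norm_le hxy
      · refine Eventually.of_forall fun t ht => ?_
        have h2 : 2 ≤ t := hx.trans ht.1.le
        have h3 := hlogpos t h2
        have h4 := hC t (by linarith)
        have h5 : f' t ≤ 0 := by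
          simp only [hf']
          apply div_nonpos_of_nonpos_of_nonneg
          · rw [neg_nonpos]; positivity
          · positivity
        rw [Real.norm_eq_abs, abs_mul, abs_of_nonpos h5, mul_comm]
        exact mul_le_mul_of_nonneg_right h4 (by linarith)
      · apply ContinuousOn.intervalIntegrable
        rw [Set.uIcc_of_le hxy]
        exact continuousOn_const.mul hc.neg
    have hend : ∀ z, 2 ≤ z → |(Real.log z)⁻¹ * R z - 1| ≤ C * (Real.log z)⁻¹ := by
      intro z hz
      have h3 := hlogpos z hz
      have : (Real.log z)⁻¹ * R z - 1 = (R z - Real.log z) * (Real.log z)⁻¹ := by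
        field_simp
      rw [this, abs_mul, abs_of_pos (inv_pos.2 h3)]
      exact mul_le_mul_of_nonneg_right (hC z (by linarith)) (inv_pos.2 h3).le
    have hex := abs_le.1 (hend x hx)
    have hey := abs_le.1 (hend y (hx.trans hxy))
    have hI3' := abs_le.1 hI3
    change _ = (Real.log y)⁻¹ * R y - (Real.log x)⁻¹ * R x - ∫ t in x..y, f' t * R t at ab
    rw [hI2] at ab
    rw [div_eq_mul_inv, abs_le]
    constructor <;> linarith
  have hfin : ∀ y, ∑ᶠ p ∈ {p : P | (N p : ℝ) ≤ y}, 1 / (N p : ℝ) = ∑ p ∈ BfS N y, 1 / (N p : ℝ) := by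
    intro y
    rw [← finsum_mem_coe_finset]
    congr! 3
    simp [mem_BfS hf]
  unfold IsMertens at hA
  simp only [hfin] at hA
  have hlim := ((hA.sub_const (∑ p ∈ BfS N x, 1 / (N p : ℝ) - Real.log (Real.log x))).abs)
  rw [abs_sub_comm]
  exact le_of_tendsto hlim ((eventually_ge_atTop x).mono fun y hy => key y hy)

lemma tailP {P : Type*} {N : P → ℕ} {κ θ : ℝ} (hN : ∀ p, 2 ≤ N p) (hs : StarCond N κ θ)
    (ε K : ℝ) (hε : 0 < ε) (l : P → ℝ) (hl0 : ∀ p, 0 ≤ l p)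
    (hl : ∀ p, l p ≤ K * (N p : ℝ) ^ (-(1 + 2 * ε))) :
    ∃ C : ℝ, ∀ y : ℝ, 2 ≤ y → |∑ p ∈ BfS N y, l p - ∑' p, l p| ≤ C / Real.log y := by
  have hf := finP (fin_of_star hs)
  have hN2 : ∀ p, (2:ℝ) ≤ N p := fun p => by exact_mod_cast hN p
  have hsum : Summable l :=
    Summable.of_nonneg_of_le hl0 hl ((summableP hN hs (1 + 2 * ε) (by linarith)).mul_left K)
  have hsum2 := summableP hN hs (1 + ε) (by linarith)
  set T := ∑' p, (N p : ℝ) ^ (-(1 + ε)) with hT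
  have hT0 : 0 ≤ T := tsum_nonneg fun p => by positivity
  refine ⟨|K| * T / ε, fun y hy => ?_⟩
  have hy0 : (0:ℝ) < y := by linarith
  have hly : 0 < Real.log y := Real.log_pos (by linarith)
  have h1 := hsum.sum_add_tsum_subtype_compl (BfS N y)
  have h2 : 0 ≤ ∑' p : {p // p ∉ BfS N y}, l p := tsum_nonneg fun p => hl0 p
  have h3 : ∑' p : {p // p ∉ BfS N y}, l p ≤ |K| * y ^ (-ε) * T := by
    have h4 : Summable (fun p : {p // p ∉ BfS N y} => |K| * y ^ (-ε) * (N p : ℝ) ^ (-(1 + ε))) :=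
      (hsum2.mul_left _).subtype _
    calc _ ≤ ∑' p : {p // p ∉ BfS N y}, |K| * y ^ (-ε) * (N p : ℝ) ^ (-(1 + ε)) := by
          refine Summable.tsum_le_tsum (fun p => ?_) (hsum.subtype _) h4
          have hp := p.2
          rw [mem_BfS hf] at hp
          push Not at hp
          have h0 : (0:ℝ) < N p := by linarith [hN2 p]
          refine (hl p).trans ?_
          have e1 : (N p : ℝ) ^ (-(1 + 2 * ε)) = (N p : ℝ) ^ (-ε) * (N p : ℝ) ^ (-(1 + ε)) := by
            rw [← Real.rpow_add h0]; ring_nf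
          have e2 : (N p : ℝ) ^ (-ε) ≤ y ^ (-ε) :=
            Real.rpow_le_rpow_of_nonpos hy0 hp.le (by linarith)
          rw [e1, mul_assoc]
          refine mul_le_mul (le_abs_self K) ?_ (by positivity) (abs_nonneg _)
          exact mul_le_mul_of_nonneg_right e2 (by positivity)
      _ = |K| * y ^ (-ε) * ∑' p : {p // p ∉ BfS N y}, (N p : ℝ) ^ (-(1 + ε)) := tsum_mul_left
      _ ≤ _ := by
          apply mul_le_mul_of_nonneg_left _ (by positivity)
          exact Summable.tsum_subtype_le (fun p => (N p : ℝ) ^ (-(1 + ε))) {p | p ∉ BfS N y}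
            (fun p => by positivity) hsum2
  have h5 : y ^ (-ε) ≤ 1 / (ε * Real.log y) := by
    have := Real.log_le_rpow_div hy0.le hε
    rw [Real.rpow_neg hy0.le, ← one_div]
    apply one_div_le_one_div_of_le (by positivity)
    rw [le_div_iff₀ hε] at this
    linarith
  have h6 : |K| * y ^ (-ε) * T ≤ |K| * T / ε / Real.log y := by
    calc |K| * y ^ (-ε) * T = |K| * T * y ^ (-ε) := by ring
      _ ≤ |K| * T * (1 / (ε * Real.log y)) :=
          mul_le_mul_of_nonneg_left h5 (mul_nonneg (abs_nonneg _) hT0)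
      _ = _ := by field_simp
  rw [abs_le]
  constructor <;> linarith

/-- Mertens-type estimate for the weighted prime sum arising in the `h`-full
first moment. -/
theorem hfull_prime_sum {P : Type*} [Countable P] (N : P → ℕ)
    (hN : ∀ p, 2 ≤ N p) (κ θ : ℝ) (hstar : StarCond N κ θ)
    (A : ℝ) (hA : IsMertens N A) (h : ℕ) (hh : 2 ≤ h) :
    (fun x : ℝ =>
        (∑ᶠ p ∈ {p : P | (N p : ℝ) ≤ x ^ (1 / (h : ℝ))},
            1 / ((N p : ℝ) *
              (1 - (N p : ℝ) ^ (-(1 / (h : ℝ))) + ((N p : ℝ))⁻¹)))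
          - Real.log (Real.log x) - D1const N h A)
      =O[atTop] fun x : ℝ => 1 / Real.log x := by
  have hf := finP (fin_of_star hstar)
  have hN2 : ∀ p, (2:ℝ) ≤ N p := fun p => by exact_mod_cast hN p
  have hh2 : (2:ℝ) ≤ h := by exact_mod_cast hh
  have hh0 : (0:ℝ) < h := by linarith
  set a : ℝ := 1 / (h:ℝ) with ha
  have ha0 : 0 < a := by positivity
  have ha1 : a ≤ 1 / 2 := one_div_le_one_div_of_le (by norm_num) hh2
  set c : ℝ := 1 - 2 ^ (-a) with hc
  have hc0 : 0 < c := by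
    have : (2:ℝ) ^ (-a) < 1 := Real.rpow_lt_one_of_one_lt_of_neg (by norm_num) (by linarith)
    linarith
  set D : P → ℝ := fun p => (N p : ℝ) - (N p : ℝ) ^ (1 - a) + 1 with hD
  have hNa : ∀ p, (N p : ℝ) ^ (1 - a) = N p * (N p : ℝ) ^ (-a) := by
    intro p
    have h0 : (0:ℝ) < N p := by linarith [hN2 p]
    rw [sub_eq_add_neg, Real.rpow_add h0, Real.rpow_one]
  have hDc : ∀ p, c * N p ≤ D p := by
    intro p
    have h0 : (0:ℝ) < N p := by linarith [hN2 p]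
    have h1 : (N p : ℝ) ^ (-a) ≤ 2 ^ (-a) :=
      Real.rpow_le_rpow_of_nonpos (by norm_num) (hN2 p) (by linarith)
    simp only [hD, hNa, hc]
    nlinarith
  have hD0 : ∀ p, 0 < D p := fun p =>
    lt_of_lt_of_le (mul_pos hc0 (by linarith [hN2 p])) (hDc p)
  have hDinv : ∀ p, ∀ b : ℝ, a ≤ b → 1 / ((N p : ℝ) ^ b * D p) ≤
      1 / c * (N p : ℝ) ^ (-(1 + 2 * (a / 2))) := by
    intro p b hb
    have h0 : (0:ℝ) < N p := by linarith [hN2 p]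
    have h1 : (N p : ℝ) ^ a ≤ (N p : ℝ) ^ b :=
      Real.rpow_le_rpow_of_exponent_le (by linarith [hN2 p]) hb
    have h2 : (N p : ℝ) ^ (-(1 + 2 * (a / 2))) = ((N p : ℝ) ^ a * N p)⁻¹ := by
      rw [Real.rpow_neg h0.le, ← Real.rpow_add_one h0.ne']; ring_nf
    rw [h2, ← one_div, one_div_mul_one_div]
    apply one_div_le_one_div_of_le (by positivity)
    calc c * ((N p : ℝ) ^ a * N p) = (N p : ℝ) ^ a * (c * N p) := by ring
      _ ≤ _ := mul_le_mul h1 (hDc p) (by positivity) (by positivity)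
  set l1 : P → ℝ := fun p => 1 / ((N p : ℝ) ^ (((h:ℝ) + 1) / h - 1) * D p) with hl1
  set l2 : P → ℝ := fun p => 1 / ((N p : ℝ) ^ ((2 * (h:ℝ)) / h - 1) * D p) with hl2
  have ex1 : ((h:ℝ) + 1) / h - 1 = a := by rw [ha]; field_simp; ring
  have ex2 : (2 * (h:ℝ)) / h - 1 = 1 := by field_simp; norm_num
  have hpos : ∀ p, ∀ b : ℝ, 0 ≤ 1 / ((N p : ℝ) ^ b * D p) := by
    intro p b
    have := hD0 p
    positivity
  obtain ⟨C1, hC1⟩ := tailP hN hstar (a / 2) (1 / c) (by positivity) l1 (fun p => hpos p _)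
    (fun p => hDinv p _ (by rw [ex1]))
  obtain ⟨C2, hC2⟩ := tailP hN hstar (a / 2) (1 / c) (by positivity) l2 (fun p => hpos p _)
    (fun p => hDinv p _ (by rw [ex2]; linarith))
  obtain ⟨C0, hC0⟩ := mertens2 hN hstar A hA
  have hfin : ∀ y (g : P → ℝ), ∑ᶠ p ∈ {p : P | (N p : ℝ) ≤ y}, g p = ∑ p ∈ BfS N y, g p := by
    intro y g
    rw [← finsum_mem_coe_finset]
    congr! 3
    simp [mem_BfS hf]
  have hterm : ∀ p, 1 / ((N p : ℝ) * (1 - (N p : ℝ) ^ (-a) + ((N p : ℝ))⁻¹)) =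
      1 / (N p : ℝ) + l1 p - l2 p := by
    intro p
    have h0 : (0:ℝ) < N p := by linarith [hN2 p]
    have hd := hD0 p
    have e1 : (N p : ℝ) * (1 - (N p : ℝ) ^ (-a) + ((N p : ℝ))⁻¹) = D p := by
      simp only [hD, hNa]; field_simp
    simp only [hl1, hl2, ex1, ex2, Real.rpow_one]
    rw [e1]
    have hna : 0 < (N p : ℝ) ^ a := by positivity
    have e2 : D p * (N p : ℝ) ^ a = N p * (N p : ℝ) ^ a - N p + (N p : ℝ) ^ a := by
      simp only [hD, hNa, Real.rpow_neg h0.le]; field_simp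
    field_simp
    linear_combination (-1) * e2
  have hy2 : ∀ᶠ x : ℝ in atTop, 2 ≤ x ^ a := (tendsto_rpow_atTop ha0).eventually_ge_atTop 2
  refine IsBigO.of_bound ((C0 + C1 + C2) * h) ?_
  filter_upwards [hy2, eventually_gt_atTop 1] with x hy hx
  have hlx : 0 < Real.log x := Real.log_pos hx
  have hx0 : (0:ℝ) < x := by linarith
  have hf1 := hfin (x ^ a) (fun p => 1 / ((N p : ℝ) * (1 - (N p : ℝ) ^ (-a) + ((N p : ℝ))⁻¹)))
  simp only [Set.mem_ofPred_eq] at hf1 ⊢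
  rw [hf1, Finset.sum_congr rfl (fun p _ => hterm p), Finset.sum_sub_distrib,
    Finset.sum_add_distrib]
  have hly : Real.log (x ^ a) = Real.log x / h := by
    rw [Real.log_rpow hx0, ha]; ring
  have hlly : Real.log (Real.log (x ^ a)) = Real.log (Real.log x) - Real.log h := by
    rw [hly, Real.log_div hlx.ne' hh0.ne']
  have b0 := hC0 _ hy
  have b1 := hC1 _ hy
  have b2 := hC2 _ hy
  rw [hlly] at b0
  rw [hly] at b0 b1 b2
  have hdd : ∀ C : ℝ, C / (Real.log x / h) = C * h * (1 / Real.log x) := by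
    intro C; field_simp
  rw [hdd] at b0 b1 b2
  have hL1 : LhSum N h ((h:ℝ) + 1) = ∑' p, l1 p := rfl
  have hL2 : LhSum N h (2 * (h:ℝ)) = ∑' p, l2 p := rfl
  unfold D1const
  rw [hL1, hL2, Real.norm_eq_abs, Real.norm_eq_abs, abs_of_pos (by positivity : 0 < 1 / Real.log x)]
  rw [abs_le] at b0 b1 b2 ⊢
  constructor <;> linarith
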